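/- Let p = p(n) ∈ [0,1] be such that limsup_{n→∞} p(n) < 1/2. Then asymptotically almost surely, every orientation of the binomial random graph G(n,p) contains a Sullivan vertex. -/

import Mathlib

open Filter

/-- The outneighbourhood `N1(v)` of `v` in the digraph with arc relation `D`. -/
def outNbr {V : Type*} (D : V → V → Prop) (v : V) : Set V := {w | w ≠ v ∧ D v w}

/-- The inneighbourhood `N⁻(v)` of `v`. -/
def inNbr {V : Type*} (D : V → V → Prop) (v : V) : Set V := {w | w ≠ v ∧ D w v}

/-- The second outneighbourhood `N2(v)` of `v`. -/
def outNbr2 {V : Type*} (D : V → V → Prop) (v : V) : Set V :=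
  {w | w ∉ insert v (outNbr D v) ∧ ∃ u ∈ outNbr D v, D u w}

/-- `v` is a Seymour vertex: `|N2(v)| ≥ |N1(v)|`. -/
def SeymourVertex {V : Type*} (D : V → V → Prop) (v : V) : Prop :=
  (outNbr D v).ncard ≤ (outNbr2 D v).ncard

/-- `v` is a Sullivan vertex: `|N2(v)| ≥ |N⁻(v)|`. -/
def SullivanVertex {V : Type*} (D : V → V → Prop) (v : V) : Prop :=
  (inNbr D v).ncard ≤ (outNbr2 D v).ncard

/-- An oriented graph: an asymmetric (hence irreflexive and loopless) arc relation. -/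
def OrientedGraph {V : Type*} (D : V → V → Prop) : Prop := ∀ u v, D u v → ¬ D v u

/-- `D` is an orientation of the simple graph `G`. -/
def Orients {V : Type*} (D : V → V → Prop) (G : SimpleGraph V) : Prop :=
  OrientedGraph D ∧ ∀ u v, G.Adj u v ↔ (D u v ∨ D v u)

/-- Strong connectivity of a digraph: every vertex reaches every other by a directed path. -/
def StrongConn {V : Type*} (D : V → V → Prop) : Prop := ∀ u v, Relation.ReflTransGen D u v

/-- The number of edges of `G` with one endpoint in `A` and the other in `B`
(counted via ordered pairs; equals `e(A,B)` for disjoint `A`, `B`). -/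
noncomputable def eBtw {V : Type*} (G : SimpleGraph V) (A B : Set V) : ℕ :=
  {p : V × V | p.1 ∈ A ∧ p.2 ∈ B ∧ G.Adj p.1 p.2}.ncard

/-- The number of edges of `G` with both endpoints in `A`. -/
noncomputable def eIn {V : Type*} (G : SimpleGraph V) (A : Set V) : ℕ :=
  {e | e ∈ G.edgeSet ∧ ∀ v ∈ e, v ∈ A}.ncard

open scoped Classical in
/-- The probability that the binomial random graph `G(n,p)` satisfies the property `P`. -/
noncomputable def gnpProb (n : ℕ) (p : ℝ) (P : SimpleGraph (Fin n) → Prop) : ℝ :=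
  ∑ G : SimpleGraph (Fin n),
    if P G then p ^ G.edgeSet.ncard * (1 - p) ^ (n.choose 2 - G.edgeSet.ncard) else 0

noncomputable section SullivanProof
open scoped Classical
open Finset

/-- weight -/
def wt (n : ℕ) (p : ℝ) (G : SimpleGraph (Fin n)) : ℝ :=
  p ^ G.edgeSet.ncard * (1 - p) ^ (n.choose 2 - G.edgeSet.ncard)

/-- expectation -/
def Ex (n : ℕ) (p : ℝ) (f : SimpleGraph (Fin n) → ℝ) : ℝ := ∑ G, wt n p G * f G

/-- all potential edges -/
def EE (n : ℕ) : Finset (Sym2 (Fin n)) := univ.filter (fun e => ¬ e.IsDiag)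

/-- number of edges of `G` in `F` -/
def cnt {n : ℕ} (F : Finset (Sym2 (Fin n))) (G : SimpleGraph (Fin n)) : ℕ :=
  (F.filter (fun e => e ∈ G.edgeSet)).card

lemma card_EE (n : ℕ) : (EE n).card = n.choose 2 := by
  have := Sym2.card_subtype_not_diag (α := Fin n)
  rw [Fintype.card_fin, Fintype.card_subtype] at this
  rw [← this]; unfold EE; congr

lemma wt_nonneg {n : ℕ} {p : ℝ} (h0 : 0 ≤ p) (h1 : p ≤ 1) (G) : 0 ≤ wt n p G := by
  unfold wt; have : 0 ≤ 1 - p := by linarith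
  positivity

lemma gnpProb_eq (n p P) : gnpProb n p P = Ex n p (fun G => if P G then 1 else 0) := by
  unfold gnpProb Ex wt
  apply Finset.sum_congr rfl
  intro G _
  by_cases h : P G <;> simp [h]

lemma edges_sub {n : ℕ} (G : SimpleGraph (Fin n)) :
    univ.filter (fun e => e ∈ G.edgeSet) ⊆ EE n := by
  intro e he
  simp only [EE, mem_filter, mem_univ, true_and] at *
  exact G.not_isDiag_of_mem_edgeSet he

lemma Ex_prod (n : ℕ) (p : ℝ) (a b : Sym2 (Fin n) → ℝ) :
    Ex n p (fun G => ∏ e ∈ EE n, if e ∈ G.edgeSet then a e else b e)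
      = ∏ e ∈ EE n, (p * a e + (1 - p) * b e) := by
  rw [Finset.prod_add]
  unfold Ex
  refine Finset.sum_bij' (fun G _ => univ.filter (fun e => e ∈ G.edgeSet))
    (fun T _ => SimpleGraph.fromEdgeSet (T : Set (Sym2 (Fin n)))) ?_ ?_ ?_ ?_ ?_
  · intro G _
    exact Finset.mem_powerset.2 (edges_sub G)
  · intro T _; simp
  · intro G _; simp
  · intro T hT
    ext e
    have := Finset.mem_powerset.1 hT
    simp only [SimpleGraph.edgeSet_fromEdgeSet, mem_filter, mem_univ, true_and, Set.mem_sdiff,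
      mem_coe]
    constructor
    · exact fun h => h.1
    · intro h
      refine ⟨h, ?_⟩
      have := this h
      simp only [EE, mem_filter] at this
      exact this.2
  · intro G _
    set T := univ.filter (fun e => e ∈ G.edgeSet) with hT
    have hTE : T ⊆ EE n := edges_sub G
    have hc : G.edgeSet.ncard = T.card := by
      rw [← Set.ncard_coe_finset]; congr 1; ext e; simp [hT]
    have e1 : ∏ e ∈ EE n, (if e ∈ G.edgeSet then a e else b e)
        = (∏ e ∈ T, a e) * ∏ e ∈ EE n \ T, b e := by
      rw [← Finset.prod_sdiff hTE, mul_comm]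
      congr 1
      · apply Finset.prod_congr rfl
        intro e he
        simp only [hT, mem_filter] at he
        rw [if_pos he.2]
      · apply Finset.prod_congr rfl
        intro e he
        rw [Finset.mem_sdiff] at he
        have : e ∉ G.edgeSet := fun h => he.2 (by simp [hT, h])
        rw [if_neg this]
    beta_reduce
    rw [e1, Finset.prod_mul_distrib, Finset.prod_mul_distrib, Finset.prod_const, Finset.prod_const,
      Finset.card_sdiff_of_subset hTE, card_EE, wt, hc]
    ring

lemma Ex_one (n : ℕ) (p : ℝ) : Ex n p (fun _ => 1) = 1 := by
  have := Ex_prod n p (fun _ => 1) (fun _ => 1)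
  simpa using this

lemma Ex_mono {n : ℕ} {p : ℝ} (h0 : 0 ≤ p) (h1 : p ≤ 1) {f g : SimpleGraph (Fin n) → ℝ}
    (h : ∀ G, f G ≤ g G) : Ex n p f ≤ Ex n p g :=
  Finset.sum_le_sum fun G _ => mul_le_mul_of_nonneg_left (h G) (wt_nonneg h0 h1 G)

lemma Ex_add (n : ℕ) (p : ℝ) (f g : SimpleGraph (Fin n) → ℝ) :
    Ex n p (fun G => f G + g G) = Ex n p f + Ex n p g := by
  simp [Ex, mul_add, Finset.sum_add_distrib]

lemma Ex_mul (n : ℕ) (p c : ℝ) (f : SimpleGraph (Fin n) → ℝ) :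
    Ex n p (fun G => c * f G) = c * Ex n p f := by
  simp only [Ex, Finset.mul_sum]
  exact Finset.sum_congr rfl fun G _ => by ring

lemma Ex_sum {ι : Type*} (s : Finset ι) (n : ℕ) (p : ℝ) (f : ι → SimpleGraph (Fin n) → ℝ) :
    Ex n p (fun G => ∑ i ∈ s, f i G) = ∑ i ∈ s, Ex n p (f i) := by
  simp only [Ex, Finset.mul_sum]
  exact Finset.sum_comm

lemma prob_le {n : ℕ} {p : ℝ} (h0 : 0 ≤ p) (h1 : p ≤ 1) {P : SimpleGraph (Fin n) → Prop}
    {f : SimpleGraph (Fin n) → ℝ} (hf : ∀ G, 0 ≤ f G) (hP : ∀ G, P G → 1 ≤ f G) :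
    gnpProb n p P ≤ Ex n p f := by
  rw [gnpProb_eq]
  refine Ex_mono h0 h1 fun G => ?_
  split_ifs with h
  · exact hP G h
  · exact hf G

lemma prob_mono {n : ℕ} {p : ℝ} (h0 : 0 ≤ p) (h1 : p ≤ 1) {P Q : SimpleGraph (Fin n) → Prop}
    (h : ∀ G, P G → Q G) : gnpProb n p P ≤ gnpProb n p Q := by
  rw [gnpProb_eq n p Q]
  exact prob_le h0 h1 (fun G => by split_ifs <;> norm_num) (fun G hG => by simp [h G hG])

lemma prob_nonneg {n : ℕ} {p : ℝ} (h0 : 0 ≤ p) (h1 : p ≤ 1) {P : SimpleGraph (Fin n) → Prop} :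
    0 ≤ gnpProb n p P := by
  rw [gnpProb_eq]
  exact Finset.sum_nonneg fun G _ => mul_nonneg (wt_nonneg h0 h1 G) (by beta_reduce; split_ifs <;> norm_num)

lemma prob_compl (n : ℕ) (p : ℝ) (P : SimpleGraph (Fin n) → Prop) :
    gnpProb n p P = 1 - gnpProb n p (fun G => ¬ P G) := by
  rw [gnpProb_eq, gnpProb_eq, eq_sub_iff_add_eq, ← Ex_add]
  refine Eq.trans ?_ (Ex_one n p)
  congr 1; ext G; by_cases h : P G <;> simp [h]

lemma prob_union {n : ℕ} {p : ℝ} (h0 : 0 ≤ p) (h1 : p ≤ 1) {ι : Type*} [Fintype ι]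
    {P : SimpleGraph (Fin n) → Prop} {Q : ι → SimpleGraph (Fin n) → Prop} {c : ℝ}
    (h : ∀ G, P G → ∃ i, Q i G) (hQ : ∀ i, gnpProb n p (Q i) ≤ c) :
    gnpProb n p P ≤ Fintype.card ι * c := by
  have h2 : gnpProb n p P ≤ Ex n p (fun G => ∑ i, if Q i G then (1:ℝ) else 0) := by
    refine prob_le h0 h1 (fun G => Finset.sum_nonneg fun i _ => by split_ifs <;> norm_num) ?_
    intro G hG
    obtain ⟨i, hi⟩ := h G hG
    have := Finset.single_le_sum (f := fun i => if Q i G then (1:ℝ) else 0)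
      (fun i _ => by split_ifs <;> norm_num) (Finset.mem_univ i)
    simpa [hi] using this
  rw [Ex_sum] at h2
  refine h2.trans ?_
  calc _ ≤ ∑ i : ι, c := Finset.sum_le_sum fun i _ => by rw [← gnpProb_eq]; exact hQ i
    _ = _ := by simp

lemma prob_or {n : ℕ} {p : ℝ} (h0 : 0 ≤ p) (h1 : p ≤ 1)
    (P Q : SimpleGraph (Fin n) → Prop) :
    gnpProb n p (fun G => P G ∨ Q G) ≤ gnpProb n p P + gnpProb n p Q := by
  rw [gnpProb_eq n p P, gnpProb_eq n p Q, ← Ex_add]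
  refine prob_le h0 h1 (fun G => ?_) (fun G h => ?_)
  · split_ifs <;> norm_num
  · rcases h with h | h
    · simp only [h, if_true]; split_ifs <;> norm_num
    · simp only [h, if_true]; split_ifs <;> norm_num

lemma Ex_exp (n : ℕ) (p t : ℝ) (F : Finset (Sym2 (Fin n))) (hF : F ⊆ EE n) :
    Ex n p (fun G => Real.exp (t * cnt F G)) = (1 + p * (Real.exp t - 1)) ^ F.card := by
  have := Ex_prod n p (fun e => if e ∈ F then Real.exp t else 1) (fun e => 1)
  rw [← Finset.prod_subset hF] at this
  · rw [Finset.prod_congr rfl (g := fun e => 1 + p * (Real.exp t - 1))] at this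
    · rw [Finset.prod_const] at this
      rw [← this]
      congr 1; ext G
      rw [← Finset.prod_subset hF, mul_comm, Real.exp_nat_mul, cnt, ← Finset.prod_const,
        Finset.prod_filter]
      · apply Finset.prod_congr rfl; intro e he; simp [he]
      · intro e _ he; simp [he]
    · intro e he; simp [he]; ring
  · intro e _ he; simp [he]

lemma Ex_exp_le {n : ℕ} {p : ℝ} (h0 : 0 ≤ p) (h1 : p ≤ 1) (t : ℝ) (F : Finset (Sym2 (Fin n)))
    (hF : F ⊆ EE n) :
    Ex n p (fun G => Real.exp (t * cnt F G)) ≤ Real.exp (p * F.card * (Real.exp t - 1)) := by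
  rw [Ex_exp n p t F hF]
  have h : 0 ≤ 1 + p * (Real.exp t - 1) := by nlinarith [Real.exp_pos t]
  calc _ ≤ (Real.exp (p * (Real.exp t - 1))) ^ F.card := by
        gcongr; linarith [Real.add_one_le_exp (p * (Real.exp t - 1))]
    _ = _ := by rw [← Real.exp_nat_mul]; ring_nf

lemma chernoff {n : ℕ} {p : ℝ} (h0 : 0 ≤ p) (h1 : p ≤ 1) (t T : ℝ) (F : Finset (Sym2 (Fin n)))
    (hF : F ⊆ EE n) :
    gnpProb n p (fun G => t * T ≤ t * cnt F G) ≤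
      Real.exp (p * F.card * (Real.exp t - 1) - t * T) := by
  have : gnpProb n p (fun G => t * T ≤ t * cnt F G) ≤
      Ex n p (fun G => Real.exp (-(t * T)) * Real.exp (t * cnt F G)) := by
    refine prob_le h0 h1 (fun G => by positivity) (fun G h => ?_)
    rw [← Real.exp_add]
    exact Real.one_le_exp (by linarith)
  refine this.trans ?_
  rw [Ex_mul, sub_eq_neg_add, Real.exp_add]
  gcongr
  exact Ex_exp_le h0 h1 t F hF

lemma prob_empty (n : ℕ) (p : ℝ) (F : Finset (Sym2 (Fin n))) (hF : F ⊆ EE n) :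
    gnpProb n p (fun G => ∀ e ∈ F, e ∉ G.edgeSet) = (1 - p) ^ F.card := by
  have := Ex_prod n p (fun e => if e ∈ F then 0 else 1) (fun e => 1)
  rw [← Finset.prod_subset hF] at this
  · rw [Finset.prod_congr rfl (g := fun e => 1 - p)] at this
    · rw [Finset.prod_const] at this
      rw [← this, gnpProb_eq]
      congr 1; ext G
      rw [← Finset.prod_subset hF]
      · split_ifs with h
        · rw [Finset.prod_eq_one]; intro e he; simp [h e he]
        · push Not at h
          obtain ⟨e, he, h⟩ := h
          rw [Finset.prod_eq_zero he]; simp [he, h]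
      · intro e _ he; simp [he]
    · intro e he; simp [he]
  · intro e _ he; simp [he]


/-- edges at `v` -/
def starE {n : ℕ} (v : Fin n) : Finset (Sym2 (Fin n)) := (EE n).filter (fun e => v ∈ e)
/-- edges touching `X` -/
def touchE {n : ℕ} (X : Finset (Fin n)) : Finset (Sym2 (Fin n)) :=
  (EE n).filter (fun e => ∃ v ∈ X, v ∈ e)
/-- edges inside `X` -/
def insE {n : ℕ} (X : Finset (Fin n)) : Finset (Sym2 (Fin n)) :=
  (EE n).filter (fun e => ∀ v ∈ e, v ∈ X)
/-- edges between -/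
def btwE {n : ℕ} (A S : Finset (Fin n)) : Finset (Sym2 (Fin n)) :=
  (EE n).filter (fun e => ∃ a ∈ A, ∃ s ∈ S, e = s(a, s))

lemma dbl {n : ℕ} (Q : Finset (Sym2 (Fin n))) (hQ : Q ⊆ EE n) (X : Finset (Fin n)) :
    ∑ v ∈ X, (Q.filter (fun e => v ∈ e)).card =
      (Q.filter (fun e => ∃ v ∈ X, v ∈ e)).card + (Q.filter (fun e => ∀ v ∈ e, v ∈ X)).card := by
  have h1 : ∑ v ∈ X, (Q.filter (fun e => v ∈ e)).card
      = ∑ e ∈ Q, (X.filter (fun v => v ∈ e)).card := by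
    simp only [Finset.card_filter]
    exact Finset.sum_comm
  rw [h1, Finset.card_filter, Finset.card_filter, ← Finset.sum_add_distrib]
  apply Finset.sum_congr rfl
  intro e he
  have hd := hQ he
  simp only [EE, mem_filter, mem_univ, true_and] at hd
  induction e using Sym2.ind with
  | _ a b =>
    have hab : a ≠ b := by simpa using hd
    simp only [Sym2.mem_iff]
    have : X.filter (fun v => v = a ∨ v = b)
        = (if a ∈ X then {a} else ∅) ∪ (if b ∈ X then {b} else ∅) := by
      ext v; by_cases ha : a ∈ X <;> by_cases hb : b ∈ X <;> simp [ha, hb] <;> grind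
    rw [this]
    by_cases ha : a ∈ X <;> by_cases hb : b ∈ X <;> simp [ha, hb]
    · rw [Finset.card_pair hab, if_pos ⟨a, ha, Or.inl rfl⟩]
    · exact ⟨a, ha, fun h => absurd rfl h⟩
    · exact ⟨b, hb, fun _ => rfl⟩
    · intro x hx
      exact ⟨fun h => ha (h ▸ hx), fun h => hb (h ▸ hx)⟩

lemma cnt_dbl {n : ℕ} (G : SimpleGraph (Fin n)) (X : Finset (Fin n)) :
    ∑ v ∈ X, cnt (starE v) G = cnt (touchE X) G + cnt (insE X) G := by
  have := dbl ((EE n).filter (fun e => e ∈ G.edgeSet)) (Finset.filter_subset _ _) X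
  simp only [cnt, starE, touchE, insE]
  simp only [Finset.filter_filter] at *
  convert this using 4 <;> grind

lemma card_starE {n : ℕ} (v : Fin n) : (starE v).card ≤ n := by
  have : starE v ⊆ univ.image (fun w => s(v, w)) := by
    intro e he
    simp only [starE, mem_filter] at he
    obtain ⟨w, hw⟩ := Sym2.mem_iff_exists.1 he.2
    simp [hw]
  calc _ ≤ _ := Finset.card_le_card this
    _ ≤ _ := Finset.card_image_le
    _ = n := by simp

lemma card_dbl {n : ℕ} (X : Finset (Fin n)) :
    (touchE X).card + (insE X).card ≤ X.card * n := by
  have := dbl (EE n) (Finset.Subset.refl _) X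
  unfold touchE insE
  rw [← this]
  calc _ ≤ ∑ v ∈ X, n := Finset.sum_le_sum fun v _ => card_starE v
    _ = _ := by simp

lemma card_insE {n : ℕ} (X : Finset (Fin n)) : (insE X).card = X.card.choose 2 := by
  rw [← Sym2.card_image_offDiag]
  congr 1
  ext e
  induction e using Sym2.ind with
  | _ a b =>
    simp only [insE, EE, mem_filter, mem_univ, true_and, Sym2.mem_iff, mem_image, mem_offDiag,
      Sym2.mk_isDiag_iff, Prod.exists]
    constructor
    · rintro ⟨h1, h2⟩
      exact ⟨a, b, ⟨h2 a (Or.inl rfl), h2 b (Or.inr rfl), h1⟩, rfl⟩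
    · rintro ⟨x, y, ⟨hx, hy, hxy⟩, h⟩
      have h := Sym2.eq_iff.1 h
      grind

lemma card_btwE {n : ℕ} (A S : Finset (Fin n)) : (btwE A S).card ≤ A.card * S.card := by
  have : btwE A S ⊆ (A ×ˢ S).image (fun x => s(x.1, x.2)) := by
    intro e he
    simp only [btwE, mem_filter] at he
    obtain ⟨_, a, ha, s, hs, rfl⟩ := he
    exact mem_image.2 ⟨(a, s), by simp [ha, hs], rfl⟩
  calc _ ≤ _ := Finset.card_le_card this
    _ ≤ _ := Finset.card_image_le
    _ = _ := by simp

/-- out-neighbours -/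
def oF {n : ℕ} (D : Fin n → Fin n → Prop) (v : Fin n) : Finset (Fin n) := univ.filter (fun w => D v w)
/-- in-neighbours -/
def iF {n : ℕ} (D : Fin n → Fin n → Prop) (v : Fin n) : Finset (Fin n) := univ.filter (fun w => D w v)
/-- second out-neighbours -/
def o2F {n : ℕ} (D : Fin n → Fin n → Prop) (v : Fin n) : Finset (Fin n) :=
  univ.filter (fun w => (w ≠ v ∧ ¬ D v w) ∧ ∃ u, D v u ∧ D u w)

lemma sull_iff {n : ℕ} {D : Fin n → Fin n → Prop} (hD : OrientedGraph D) (v : Fin n) :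
    SullivanVertex D v ↔ (iF D v).card ≤ (o2F D v).card := by
  have hirr : ∀ u, ¬ D u u := fun u h => hD u u h h
  have h1 : inNbr D v = ↑(iF D v) := by
    ext w; simp only [inNbr, iF, Set.mem_ofPred_eq, coe_filter, mem_univ, true_and]
    exact ⟨fun h => h.2, fun h => ⟨fun e => hirr v (e ▸ h), h⟩⟩
  have h2 : outNbr2 D v = ↑(o2F D v) := by
    ext w
    simp only [outNbr2, outNbr, o2F, Set.mem_ofPred_eq, coe_filter, mem_univ, true_and,
      Set.mem_insert_iff]
    have : ∀ u, D v u → u ≠ v := fun u h e => hirr v (e ▸ h)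
    grind
  rw [SullivanVertex, h1, h2, Set.ncard_coe_finset, Set.ncard_coe_finset]

lemma deg_le {n : ℕ} {D : Fin n → Fin n → Prop} {G : SimpleGraph (Fin n)} (h : Orients D G)
    (v : Fin n) : (oF D v).card + (iF D v).card ≤ cnt (starE v) G := by
  have hd : Disjoint (oF D v) (iF D v) := by
    rw [Finset.disjoint_left]; intro w h1 h2
    simp only [oF, iF, mem_filter, mem_univ, true_and] at h1 h2
    exact h.1 _ _ h1 h2
  rw [← Finset.card_union_of_disjoint hd, cnt]
  refine Finset.card_le_card_of_injOn (fun w => s(v, w)) ?_ ?_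
  · intro w hw
    have hadj : G.Adj v w := by
      rw [h.2]; simpa [oF, iF] using hw
    simp only [starE, EE, coe_filter, mem_filter, mem_univ, true_and, Set.mem_ofPred_eq]
    exact ⟨⟨by simpa using hadj.ne, by simp⟩, hadj⟩
  · intro w _ w' _ hww
    simpa only [Sym2.congr_right] using hww

lemma arcs_ge {n : ℕ} {D : Fin n → Fin n → Prop} {G : SimpleGraph (Fin n)} (h : Orients D G)
    (X : Finset (Fin n)) : cnt (insE X) G ≤ ∑ v, (oF D v ∩ X).card := by
  rw [← Finset.card_sigma, cnt]
  refine (Finset.card_le_card ?_).trans (Finset.card_image_le (f := fun x => s(x.1, x.2)))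
  intro e he
  induction e using Sym2.ind with
  | _ a b =>
    simp only [insE, mem_filter, Sym2.mem_iff] at he
    obtain ⟨⟨_, hX⟩, he⟩ := he
    have := (h.2 a b).1 he
    rw [mem_image]
    rcases this with h' | h'
    · exact ⟨⟨a, b⟩, by simp [oF, h', hX b], rfl⟩
    · exact ⟨⟨b, a⟩, by simp [oF, h', hX a], Sym2.eq_swap⟩

lemma arcs_le {n : ℕ} {D : Fin n → Fin n → Prop} {G : SimpleGraph (Fin n)} (h : Orients D G)
    (A S : Finset (Fin n)) (hS : ∀ u ∈ A, oF D u ⊆ S) :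
    ∑ u ∈ A, (oF D u).card ≤ cnt (btwE A S) G := by
  rw [← Finset.card_sigma, cnt]
  refine Finset.card_le_card_of_injOn (fun x => s(x.1, x.2)) ?_ ?_
  · rintro ⟨u, w⟩ hx
    simp only [coe_sigma, Set.mem_sigma_iff, mem_coe] at hx
    have hw := hS u hx.1 hx.2
    have hD : D u w := by simpa [oF] using hx.2
    have hadj : G.Adj u w := (h.2 u w).2 (Or.inl hD)
    simp only [btwE, EE, coe_filter, mem_filter, mem_univ, true_and, Set.mem_ofPred_eq]
    exact ⟨⟨by simpa using hadj.ne, u, hx.1, w, hw, rfl⟩, hadj⟩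
  · rintro ⟨u, w⟩ hx ⟨u', w'⟩ hx' he
    simp only [coe_sigma, Set.mem_sigma_iff, mem_coe, oF, mem_filter, mem_univ, true_and] at hx hx'
    simp only [Sym2.eq_iff] at he
    rcases he with ⟨rfl, rfl⟩ | ⟨rfl, rfl⟩
    · rfl
    · exact absurd hx.2 (h.1 _ _ hx'.2)

/-- linear-set regularity -/
def EvL {n : ℕ} (p η : ℝ) (G : SimpleGraph (Fin n)) : Prop := ∀ X : Finset (Fin n),
  (cnt (touchE X) G : ℝ) ≤ p * (touchE X).card + η * (n * (n * p)) ∧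
  (cnt (insE X) G : ℝ) ≤ p * (insE X).card + η * (n * (n * p)) ∧
  p * (insE X).card - η * (n * (n * p)) ≤ (cnt (insE X) G : ℝ)

/-- small-set sparsity -/
def EvC {n : ℕ} (p δ ε : ℝ) (G : SimpleGraph (Fin n)) : Prop := ∀ A S : Finset (Fin n), A ⊆ S →
  ε * (n * p) ≤ A.card → (S.card : ℝ) ≤ (1 + δ) * (n * p) →
  (cnt (btwE A S) G : ℝ) < (p + 2 * δ) * (n * p) * A.card

lemma determ {n : ℕ} {p δ : ℝ} (hp : 0 < p) (hδ : 0 < δ) (hδ1 : δ ≤ 1/10) (hpδ : p ≤ 1/2 - 4 * δ)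
    (hn : 1 ≤ δ ^ 4 * n) (G : SimpleGraph (Fin n)) (hL : EvL p (δ ^ 4 / 2) G)
    (hC : EvC p δ (δ ^ 2 / 8) G) (D : Fin n → Fin n → Prop) (hD : Orients D G) :
    ∃ v, SullivanVertex D v := by
  by_contra hno
  push Not at hno
  have hno' : ∀ v, (o2F D v).card < (iF D v).card := by
    intro v; have := hno v; rw [sull_iff hD.1] at this; omega
  have hn0 : (0:ℝ) < n := by
    by_contra h
    have : (n:ℝ) = 0 := le_antisymm (not_lt.1 h) (Nat.cast_nonneg n)
    rw [this] at hn; norm_num at hn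
  set M : ℝ := n * p with hM
  have hM0 : 0 < M := by positivity
  have hnM : 0 < n * M := by positivity
  -- degree sums
  have hdeg : ∀ X : Finset (Fin n), ((∑ v ∈ X, cnt (starE v) G : ℕ) : ℝ)
      ≤ X.card * M + δ ^ 4 * (n * M) := by
    intro X
    rw [cnt_dbl]
    obtain ⟨h1, h2, _⟩ := hL X
    have h3 : ((touchE X).card + (insE X).card : ℝ) ≤ X.card * n := by exact_mod_cast card_dbl X
    have h4 := mul_le_mul_of_nonneg_left h3 hp.le
    push_cast
    rw [hM]
    nlinarith
  have hins : ∀ X : Finset (Fin n), p * ((X.card : ℝ) * (X.card - 1) / 2) - δ ^ 4 / 2 * (n * M)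
      ≤ ((∑ v, (oF D v ∩ X).card : ℕ) : ℝ) := by
    intro X
    have h3 := (hL X).2.2
    rw [card_insE, Nat.cast_choose_two] at h3
    have : (cnt (insE X) G : ℝ) ≤ ((∑ v, (oF D v ∩ X).card : ℕ) : ℝ) := by
      exact_mod_cast arcs_ge hD X
    linarith
  set q := p + 2 * δ with hq
  set U : Finset (Fin n) := univ.filter (fun u => q * M ≤ (oF D u).card) with hU
  set W : Finset (Fin n) := univ.filter (fun v => (1 + δ) * M < cnt (starE v) G) with hW
  -- U is large
  have hU1 : (δ - δ ^ 3) * n ≤ U.card := by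
    have h1 := hins univ
    simp only [Finset.inter_univ, Finset.card_univ, Fintype.card_fin] at h1
    rw [← Finset.sum_filter_add_sum_filter_not univ (fun u => q * M ≤ (oF D u).card)] at h1
    push_cast at h1
    have h2 : ∑ x ∈ univ.filter (fun u => ¬ q * M ≤ (oF D u).card), ((oF D x).card : ℝ)
        ≤ n * (q * M) := by
      calc _ ≤ ∑ x ∈ univ.filter (fun u => ¬ q * M ≤ (oF D u).card), (q * M) := by
            apply Finset.sum_le_sum; intro x hx
            simp only [mem_filter, mem_univ, true_and, not_le] at hx
            exact hx.le
        _ = ((univ.filter (fun u => ¬ q * M ≤ (oF D u).card)).card : ℝ) * (q * M) := by simp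
        _ ≤ _ := by
            have : (univ.filter (fun u => ¬ q * M ≤ (oF D u).card)).card ≤ n := by
              simpa using Finset.card_le_univ (univ.filter (fun u => ¬ q * M ≤ (oF D u).card))
            have h' : ((univ.filter (fun u => ¬ q * M ≤ (oF D u).card)).card : ℝ) ≤ n := by
              exact_mod_cast this
            gcongr
    have h3 : ∑ x ∈ U, ((oF D x).card : ℝ) ≤ U.card * M + δ ^ 4 * (n * M) := by
      refine le_trans ?_ (hdeg U)
      push_cast
      apply Finset.sum_le_sum; intro x _
      exact_mod_cast (Nat.le_add_right _ _).trans (deg_le hD x)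
    have h4 : p * ((n:ℝ) * (n - 1) / 2) - δ ^ 4 / 2 * (n * M) ≤
        U.card * M + δ ^ 4 * (n * M) + n * (q * M) := by linarith
    have h5 : p * ((n:ℝ) * (n - 1) / 2) = n * M / 2 - M / 2 := by rw [hM]; ring
    rw [h5] at h4
    have h6 : M ≤ δ ^ 4 * n * M := by nlinarith
    have h7 : q ≤ 1/2 - 2 * δ := by linarith
    have h8 : n * (q * M) ≤ n * ((1/2 - 2 * δ) * M) := by gcongr
    have h9 : (2 * δ - 2 * δ ^ 4) * n * M ≤ U.card * M := by nlinarith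
    have h10 := le_of_mul_le_mul_right h9 hM0
    have : δ - δ ^ 3 ≤ 2 * δ - 2 * δ ^ 4 := by nlinarith [pow_pos hδ 3, pow_pos hδ 4, pow_pos hδ 2]
    nlinarith
  -- W is small
  have hW1 : ∑ v ∈ W, (cnt (starE v) G : ℝ) ≤ (δ ^ 3 + δ ^ 4) * (n * M) := by
    have h1 := hdeg W
    push_cast at h1
    have h2 : (W.card : ℝ) * ((1 + δ) * M) ≤ ∑ v ∈ W, (cnt (starE v) G : ℝ) := by
      rw [← nsmul_eq_mul, ← Finset.sum_const]
      apply Finset.sum_le_sum; intro v hv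
      simp only [hW, mem_filter] at hv
      exact hv.2.le
    have h3 : δ * (W.card * M) ≤ δ * (δ ^ 3 * (n * M)) := by nlinarith
    have h4 := le_of_mul_le_mul_left h3 hδ
    linarith
  -- good vertices
  have hgood : ∀ v, v ∉ W → ((oF D v ∩ U).card : ℝ) ≤ δ ^ 2 / 8 * M := by
    intro v hv
    by_contra hcon
    push Not at hcon
    have hv' : (cnt (starE v) G : ℝ) ≤ (1 + δ) * M := by
      simpa [hW] using hv
    set S := oF D v ∪ o2F D v with hS
    have hSc : (S.card : ℝ) ≤ (1 + δ) * M := by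
      refine le_trans ?_ hv'
      have h1 := Finset.card_union_le (oF D v) (o2F D v)
      have h2 := hno' v
      rw [← hS] at h1
      have h3 := deg_le hD v
      exact_mod_cast (by omega : S.card ≤ cnt (starE v) G)
    have h1 := hC (oF D v ∩ U) S (Finset.inter_subset_left.trans Finset.subset_union_left)
      hcon.le hSc
    have h2 := arcs_le hD (oF D v ∩ U) S (by
      intro u hu w hw
      simp only [oF, o2F, hS, mem_inter, mem_union, mem_filter, mem_univ, true_and] at hu hw ⊢
      by_cases h : D v w
      · exact Or.inl h
      · refine Or.inr ⟨⟨?_, h⟩, u, hu.1, hw⟩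
        rintro rfl
        exact hD.1 _ _ hw hu.1)
    have h3 : (((oF D v ∩ U).card : ℕ) : ℝ) * (q * M) ≤ ((∑ u ∈ oF D v ∩ U, (oF D u).card : ℕ) : ℝ) := by
      push_cast
      rw [← nsmul_eq_mul, ← Finset.sum_const]
      apply Finset.sum_le_sum; intro u hu
      simp only [hU, mem_inter, mem_filter, mem_univ, true_and] at hu
      exact hu.2
    have h4 : ((∑ u ∈ oF D v ∩ U, (oF D u).card : ℕ) : ℝ) ≤ cnt (btwE (oF D v ∩ U) S) G := by
      exact_mod_cast h2
    have h5 : (((oF D v ∩ U).card : ℕ) : ℝ) * (q * M) = q * M * (oF D v ∩ U).card := by ring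
    linarith
  -- conclusion
  have hup : ((∑ v, (oF D v ∩ U).card : ℕ) : ℝ) ≤ (δ ^ 2 / 8 + δ ^ 3 + δ ^ 4) * (n * M) := by
    push_cast
    have h1 : ∀ v ∈ (univ : Finset (Fin n)), ((oF D v ∩ U).card : ℝ) ≤
        δ ^ 2 / 8 * M + (if v ∈ W then (cnt (starE v) G : ℝ) else 0) := by
      intro v _
      split_ifs with h
      · have : (oF D v ∩ U).card ≤ cnt (starE v) G :=
          (Finset.card_le_card Finset.inter_subset_left).trans
            ((Nat.le_add_right _ _).trans (deg_le hD v))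
        have h' : ((oF D v ∩ U).card : ℝ) ≤ cnt (starE v) G := by exact_mod_cast this
        have : 0 < δ ^ 2 / 8 * M := by positivity
        linarith
      · have := hgood v h
        linarith
    refine (Finset.sum_le_sum h1).trans ?_
    rw [Finset.sum_add_distrib, ← Finset.sum_filter]
    simp only [Finset.filter_univ_mem, Finset.sum_const, Finset.card_univ, Fintype.card_fin,
      nsmul_eq_mul]
    linarith
  have hlo := hins U
  have hUn : (U.card : ℝ) ≤ n := by
    exact_mod_cast (by simpa using Finset.card_le_univ U : U.card ≤ n)
  have h1 : ((δ - δ ^ 3) * n) ^ 2 ≤ (U.card : ℝ) ^ 2 := by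
    have : 0 ≤ δ - δ ^ 3 := by nlinarith [pow_pos hδ 2]
    gcongr
  have h2 : p * ((δ - δ ^ 3) ^ 2 * (n * n) - n) / 2 ≤ p * ((U.card : ℝ) * (U.card - 1) / 2) := by
    have : (δ - δ ^ 3) ^ 2 * (n * n) - n ≤ (U.card : ℝ) * (U.card - 1) := by nlinarith
    have := mul_le_mul_of_nonneg_left this hp.le
    linarith
  have h3 : p * ((δ - δ ^ 3) ^ 2 * (n * n) - n) / 2 = (δ - δ ^ 3) ^ 2 * (n * M) / 2 - M / 2 := by
    rw [hM]; ring
  have h6 : M ≤ δ ^ 4 * (n * M) := by nlinarith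
  have h7 : (δ - δ ^ 3) ^ 2 / 2 * (n * M) ≤ (δ ^ 2 / 8 + δ ^ 3 + 2 * δ ^ 4) * (n * M) := by
    linarith
  have h8 := le_of_mul_le_mul_right h7 hnM
  have h9 : δ ^ 2 * ((1 - δ ^ 2) ^ 2 / 2) ≤ δ ^ 2 * (1 / 8 + δ + 2 * δ ^ 2) := by nlinarith
  have h10 := le_of_mul_le_mul_left h9 (by positivity)
  have : δ ^ 2 ≤ 1/100 := by nlinarith
  nlinarith


lemma prob_false {n : ℕ} {p : ℝ} {P : SimpleGraph (Fin n) → Prop} (h : ∀ G, ¬ P G) :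
    gnpProb n p P = 0 := by
  rw [gnpProb_eq]; simp [h, Ex]

lemma lin_conc {n : ℕ} {p η : ℝ} (h0 : 0 ≤ p) (h1 : p ≤ 1) (hη : 0 < η) (hη1 : η ≤ 1)
    (σ : ℝ) (hσ : σ = 1 ∨ σ = -1) (F : Finset (Sym2 (Fin n))) (hF : F ⊆ EE n) :
    gnpProb n p (fun G => σ * (p * F.card) + η * (n * (n * p)) < σ * cnt F G) ≤
      Real.exp (- (n * (n * p) * η ^ 2 / 2)) := by
  have hσ2 : σ * σ = 1 := by rcases hσ with rfl | rfl <;> norm_num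
  have hab : |σ * η| ≤ 1 := by
    rcases hσ with rfl | rfl <;> simp [abs_of_pos hη, hη1]
  refine (prob_mono h0 h1 (Q := fun G => (σ * η) * (p * F.card + σ * (η * (n * (n * p))))
    ≤ (σ * η) * cnt F G) ?_).trans ((chernoff h0 h1 (σ * η) _ F hF).trans ?_)
  · intro G hG
    have := mul_le_mul_of_nonneg_left hG.le hη.le
    have e : (σ * η) * (p * F.card + σ * (η * (n * (n * p))))
      = η * (σ * (p * F.card) + (σ * σ) * (η * (n * (n * p)))) := by ring
    rw [e, hσ2]
    linarith
  · apply Real.exp_le_exp.2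
    have h2 := (abs_le.1 (Real.abs_exp_sub_one_sub_id_le hab)).2
    have h3 : (F.card : ℝ) ≤ n * n / 2 := by
      have := Finset.card_le_card hF
      rw [card_EE] at this
      have h' : (F.card : ℝ) ≤ (n.choose 2 : ℕ) := by exact_mod_cast this
      rw [Nat.cast_choose_two] at h'
      have : (0:ℝ) ≤ n := Nat.cast_nonneg n
      nlinarith
    have h4 : 0 ≤ p * F.card := by positivity
    have h5 : p * F.card * (Real.exp (σ * η) - 1) ≤ p * F.card * (σ * η + η ^ 2) := by
      apply mul_le_mul_of_nonneg_left _ h4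
      have : (σ * η) ^ 2 = η ^ 2 := by
        have : (σ * η) ^ 2 = (σ * σ) * η ^ 2 := by ring
        rw [this, hσ2, one_mul]
      linarith
    have h6 : p * F.card * η ^ 2 ≤ p * (n * n / 2) * η ^ 2 := by gcongr
    have e : (σ * η) * (p * F.card + σ * (η * (n * (n * p))))
      = σ * η * (p * F.card) + (σ * σ) * (η ^ 2 * (n * (n * p))) := by ring
    rw [e, hσ2]
    nlinarith

lemma prob_EvL {n : ℕ} {p η : ℝ} (h0 : 0 ≤ p) (h1 : p ≤ 1) (hη : 0 < η) (hη1 : η ≤ 1) :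
    gnpProb n p (fun G => ¬ EvL p η G) ≤ 2 ^ n * (3 * Real.exp (- (n * (n * p) * η ^ 2 / 2))) := by
  have hT : ∀ X : Finset (Fin n), touchE X ⊆ EE n := fun X => Finset.filter_subset _ _
  have hI : ∀ X : Finset (Fin n), insE X ⊆ EE n := fun X => Finset.filter_subset _ _
  have := prob_union h0 h1 (n := n) (ι := Finset (Fin n)) (P := fun G => ¬ EvL p η G)
    (Q := fun X G => ((1:ℝ) * (p * (touchE X).card) + η * (n * (n * p)) < (1:ℝ) * cnt (touchE X) G) ∨
      (((1:ℝ) * (p * (insE X).card) + η * (n * (n * p)) < (1:ℝ) * cnt (insE X) G) ∨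
      ((-1:ℝ) * (p * (insE X).card) + η * (n * (n * p)) < (-1:ℝ) * cnt (insE X) G)))
    (c := 3 * Real.exp (- (n * (n * p) * η ^ 2 / 2))) ?_ ?_
  · simpa using this
  · intro G hG
    unfold EvL at hG
    push Not at hG
    obtain ⟨X, hX⟩ := hG
    refine ⟨X, ?_⟩
    by_contra hc
    push Not at hc
    have := hX (by linarith) (by linarith)
    linarith
  · intro X
    have a1 := lin_conc h0 h1 hη hη1 1 (Or.inl rfl) (touchE X) (hT X)
    have a2 := lin_conc h0 h1 hη hη1 1 (Or.inl rfl) (insE X) (hI X)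
    have a3 := lin_conc h0 h1 hη hη1 (-1) (Or.inr rfl) (insE X) (hI X)
    refine (prob_or h0 h1 _ _).trans ?_
    have := (prob_or h0 h1 (fun G => (1:ℝ) * (p * (insE X).card) + η * (n * (n * p)) < (1:ℝ) * cnt (insE X) G) (fun G => (-1:ℝ) * (p * (insE X).card) + η * (n * (n * p)) < (-1:ℝ) * cnt (insE X) G))
    linarith

lemma exists_enum {n s : ℕ} (A : Finset (Fin n)) (hA : A.Nonempty) (h : A.card ≤ s) :
    ∃ f : Fin s → Fin n, univ.image f = A := by
  have : Nonempty (A ↪ Fin s) := Function.Embedding.nonempty_of_card_le (by simpa using h)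
  obtain ⟨e⟩ := this
  have : Nonempty A := hA.to_subtype
  refine ⟨fun i => (Function.invFun e i : A), ?_⟩
  ext x
  simp only [mem_image, mem_univ, true_and]
  constructor
  · rintro ⟨i, rfl⟩; exact (Function.invFun e i).2
  · intro hx
    obtain ⟨i, hi⟩ := Function.invFun_surjective e.injective ⟨x, hx⟩
    exact ⟨i, by rw [hi]⟩

lemma prob_EvC {n : ℕ} {p δ ε t r : ℝ} (hn : 1 ≤ n) (h0 : 0 < p) (h1 : p ≤ 1) (hδ : 0 < δ) (hδ1 : δ ≤ 1)
    (hε : 0 < ε) (ht : 0 ≤ t) (hr : 0 ≤ r)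
    (htr : p * (1 + δ) * (Real.exp t - 1) - t * (p + 2 * δ) ≤ - r) :
    gnpProb n p (fun G => ¬ EvC p δ ε G) ≤
      Real.exp (n * p * (4 * Real.log n - ε * r * (n * p))) := by
  have hn0 : (0:ℝ) < n := by exact_mod_cast hn
  set M : ℝ := n * p with hM
  have hM0 : 0 < M := by positivity
  set s : ℕ := ⌊(1 + δ) * M⌋₊ with hs
  have hsM : (s : ℝ) ≤ 2 * M := (Nat.floor_le (by positivity)).trans (by nlinarith)
  have := prob_union h0.le h1 (n := n) (ι := (Fin s → Fin n) × (Fin s → Fin n))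
    (P := fun G => ¬ EvC p δ ε G)
    (Q := fun fg G => ε * M ≤ (univ.image fg.1).card ∧ ((univ.image fg.2).card : ℝ) ≤ (1 + δ) * M ∧
      (p + 2 * δ) * M * (univ.image fg.1).card ≤ (cnt (btwE (univ.image fg.1) (univ.image fg.2)) G : ℝ))
    (c := Real.exp (- (ε * r * M * M))) ?_ ?_
  · refine this.trans ?_
    simp only [Fintype.card_prod, Fintype.card_fun, Fintype.card_fin, Nat.cast_mul, Nat.cast_pow]
    have hl : 0 ≤ Real.log n := Real.log_natCast_nonneg n
    have h2 : (n : ℝ) ^ s = Real.exp (s * Real.log n) := by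
      rw [Real.exp_nat_mul, Real.exp_log hn0]
    rw [h2, ← Real.exp_add, ← Real.exp_add]
    apply Real.exp_le_exp.2
    nlinarith
  · intro G hG
    unfold EvC at hG
    push Not at hG
    obtain ⟨A, S, hAS, hA, hS, hc⟩ := hG
    have hAne : A.Nonempty := by
      rw [← Finset.card_pos]
      have : (0:ℝ) < A.card := lt_of_lt_of_le (by positivity) hA
      exact_mod_cast this
    have hSs : S.card ≤ s := Nat.le_floor hS
    obtain ⟨f, rfl⟩ := exists_enum A hAne ((Finset.card_le_card hAS).trans hSs)
    obtain ⟨g, rfl⟩ := exists_enum S (hAne.mono hAS) hSs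
    exact ⟨(f, g), hA, hS, hc⟩
  · rintro ⟨f, g⟩
    simp only
    set A := univ.image f
    set S := univ.image g
    by_cases hA : ε * M ≤ A.card
    swap
    · rw [prob_false (fun G h => hA h.1)]; positivity
    by_cases hS : (S.card : ℝ) ≤ (1 + δ) * M
    swap
    · rw [prob_false (fun G h => hS h.2.1)]; positivity
    refine (prob_mono h0.le h1 (Q := fun G => t * ((p + 2 * δ) * M * A.card) ≤ t * cnt (btwE A S) G)
      (fun G h => mul_le_mul_of_nonneg_left h.2.2 ht)).trans ?_
    refine (chernoff h0.le h1 t _ _ (Finset.filter_subset _ _)).trans (Real.exp_le_exp.2 ?_)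
    have hb : ((btwE A S).card : ℝ) ≤ A.card * ((1 + δ) * M) := by
      have : ((btwE A S).card : ℝ) ≤ A.card * S.card := by exact_mod_cast card_btwE A S
      refine this.trans ?_
      gcongr
    have he : 0 ≤ Real.exp t - 1 := by linarith [Real.one_le_exp ht]
    have h3 : p * (btwE A S).card * (Real.exp t - 1)
        ≤ p * (A.card * ((1 + δ) * M)) * (Real.exp t - 1) := by gcongr
    have h4 : (A.card * M) * (p * (1 + δ) * (Real.exp t - 1) - t * (p + 2 * δ))
        ≤ (A.card * M) * (- r) := mul_le_mul_of_nonneg_left htr (by positivity)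
    have h5 : ε * M * (r * M) ≤ A.card * (r * M) := by gcongr
    change p * (btwE A S).card * (Real.exp t - 1) - t * ((p + 2 * δ) * M * A.card) ≤ _
    nlinarith

/-- indicator -/
def ind (P : Prop) : ℝ := if P then 1 else 0

lemma ind_pos {P : Prop} (h : P) : ind P = 1 := if_pos h
lemma ind_neg {P : Prop} (h : ¬ P) : ind P = 0 := if_neg h

lemma prob_ind (n : ℕ) (p : ℝ) (P : SimpleGraph (Fin n) → Prop) :
    gnpProb n p P = Ex n p (fun G => ind (P G)) := gnpProb_eq n p P

lemma card_starE_eq {n : ℕ} (v : Fin n) : (starE v).card = n - 1 := by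
  have : starE v = (univ.erase v).image (fun w => s(v, w)) := by
    ext e
    simp only [starE, EE, mem_filter, mem_image, mem_erase, mem_univ, true_and, and_true]
    constructor
    · rintro ⟨h1, h2⟩
      obtain ⟨w, rfl⟩ := Sym2.mem_iff_exists.1 h2
      exact ⟨w, fun h => h1 (by simp [h]), rfl⟩
    · rintro ⟨w, hw, rfl⟩
      exact ⟨by simpa using hw.symm, by simp⟩
  rw [this, Finset.card_image_of_injective _ (fun a b h => by simpa only [Sym2.congr_right] using h)]
  simp

lemma card_star_union {n : ℕ} {v w : Fin n} (h : v ≠ w) :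
    2 * n - 3 ≤ (starE v ∪ starE w).card := by
  have h1 := Finset.card_union_add_card_inter (starE v) (starE w)
  rw [card_starE_eq, card_starE_eq] at h1
  have h2 : starE v ∩ starE w ⊆ {s(v, w)} := by
    intro e he
    simp only [starE, mem_inter, mem_filter] at he
    rw [mem_singleton]
    exact (Sym2.mem_and_mem_iff h).1 ⟨he.1.2, he.2.2⟩
  have h3 := Finset.card_le_card h2
  rw [card_singleton] at h3
  omega

lemma prob_iso {n : ℕ} {p : ℝ} (hn : 2 ≤ n) (h0 : 0 ≤ p) (h1 : p ≤ 1/3)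
    (h2 : n * p ≤ Real.log n / 2) :
    gnpProb n p (fun G => ¬ ∃ v, ∀ e ∈ starE v, e ∉ G.edgeSet) ≤
      Real.exp (- (Real.log n / 4)) + Real.log n / n := by
  have hn0 : (0:ℝ) < n := by exact_mod_cast (by omega : 0 < n)
  have hp1 : 0 < 1 - p := by linarith
  set y : ℝ := (1 - p) ^ (n - 1) with hy
  have hy0 : 0 < y := by positivity
  set μ : ℝ := n * y with hμ
  have hμ0 : 0 < μ := by positivity
  set I : Fin n → SimpleGraph (Fin n) → ℝ := fun v G =>
    ind (∀ e ∈ starE v, e ∉ G.edgeSet) with hI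
  have hEI : ∀ v, Ex n p (I v) = y := by
    intro v
    have := prob_empty n p (starE v) (Finset.filter_subset _ _)
    rw [prob_ind, card_starE_eq] at this
    exact this
  have hEII : ∀ v w, Ex n p (fun G => I v G * I w G) ≤ (if v = w then y else 0) + y * y / (1 - p) := by
    intro v w
    have hq : 0 ≤ y * y / (1 - p) := by positivity
    by_cases h : v = w
    · subst h
      have : (fun G => I v G * I v G) = I v := by
        ext G; simp only [hI, ind]; split_ifs <;> norm_num
      rw [this, hEI]; simp only [if_true]; linarith
    · have e1 : (fun G => I v G * I w G) = (fun G =>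
          ind (∀ e ∈ starE v ∪ starE w, e ∉ G.edgeSet)) := by
        ext G; simp only [hI, mem_union]
        by_cases a : ∀ e ∈ starE v, e ∉ G.edgeSet <;> by_cases b : ∀ e ∈ starE w, e ∉ G.edgeSet
        · rw [ind_pos a, ind_pos b, ind_pos (fun e he => he.elim (a e) (b e))]; norm_num
        · rw [ind_neg b, ind_neg (P := ∀ e, e ∈ starE v ∨ e ∈ starE w → e ∉ G.edgeSet) (fun hh => b fun e he => hh e (Or.inr he))]; norm_num
        · rw [ind_neg a, ind_neg (P := ∀ e, e ∈ starE v ∨ e ∈ starE w → e ∉ G.edgeSet) (fun hh => a fun e he => hh e (Or.inl he))]; norm_num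
        · rw [ind_neg a, ind_neg (P := ∀ e, e ∈ starE v ∨ e ∈ starE w → e ∉ G.edgeSet) (fun hh => a fun e he => hh e (Or.inl he))]; norm_num
      have := prob_empty n p (starE v ∪ starE w)
        (Finset.union_subset (Finset.filter_subset _ _) (Finset.filter_subset _ _))
      rw [prob_ind] at this
      rw [e1, this, if_neg h, zero_add]
      refine (pow_le_pow_of_le_one hp1.le (by linarith) (card_star_union h)).trans ?_
      rw [le_div_iff₀ hp1, hy, ← pow_succ, ← pow_add]
      apply le_of_eq; congr 1; omega
  have hmain : gnpProb n p (fun G => ¬ ∃ v, ∀ e ∈ starE v, e ∉ G.edgeSet) ≤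
      Ex n p (fun G => 1 + ((-2 / μ) * (∑ v, I v G) + (1 / μ ^ 2) * ∑ v, ∑ w, I v G * I w G)) := by
    have hsq : ∀ G, 1 + ((-2 / μ) * (∑ v, I v G) + (1 / μ ^ 2) * ∑ v, ∑ w, I v G * I w G)
        = (1 - (∑ v, I v G) / μ) ^ 2 := by
      intro G
      rw [← Finset.sum_mul_sum]; field_simp; ring
    simp only [hsq]
    refine prob_le h0 (by linarith) (fun G => sq_nonneg _) ?_
    intro G hG
    have : ∑ v, I v G = 0 := by
      apply Finset.sum_eq_zero; intro v _
      simp only [hI]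
      rw [ind_neg (fun h => hG ⟨v, h⟩)]
    rw [this]; norm_num
  rw [Ex_add, Ex_add, Ex_mul, Ex_mul, Ex_one, Ex_sum, Ex_sum] at hmain
  simp only [Ex_sum, hEI] at hmain
  have hs2 : ∑ v : Fin n, ∑ w : Fin n, Ex n p (fun G => I v G * I w G) ≤ n * y + n * n * (y * y / (1 - p)) := by
    calc _ ≤ ∑ v : Fin n, ∑ w : Fin n, ((if v = w then y else 0) + y * y / (1 - p)) :=
          Finset.sum_le_sum fun v _ => Finset.sum_le_sum fun w _ => hEII v w
      _ = _ := by simp [Finset.sum_add_distrib]; ring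
  have hs3 : 1 / μ ^ 2 * ∑ v : Fin n, ∑ w : Fin n, Ex n p (fun G => I v G * I w G)
      ≤ 1 / μ ^ 2 * (n * y + n * n * (y * y / (1 - p))) := by gcongr
  have e2 : 1 / μ ^ 2 * (n * y + n * n * (y * y / (1 - p))) = 1 / μ + 1 / (1 - p) := by
    rw [hμ]; field_simp
  have e3 : -2 / μ * ∑ v : Fin n, y = -2 := by
    simp only [Finset.sum_const, Finset.card_univ, Fintype.card_fin, nsmul_eq_mul]
    rw [← hμ]; field_simp
  have hL : 0 ≤ Real.log n := Real.log_natCast_nonneg n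
  have b1 : 1 / (1 - p) ≤ 1 + 3 / 2 * p := by
    rw [div_le_iff₀ hp1]; nlinarith
  have b2 : 3 / 2 * p ≤ Real.log n / n := by
    rw [le_div_iff₀ hn0]; nlinarith
  have b3 : Real.exp (Real.log n / 4) ≤ μ := by
    have hlog : - (3 / 2 * p) ≤ Real.log (1 - p) := by
      have := Real.one_sub_inv_le_log_of_pos hp1
      rw [← one_div] at this
      linarith
    have : Real.exp (- (3 / 4 * Real.log n)) ≤ y := by
      calc _ ≤ Real.exp (n * Real.log (1 - p)) := by
            apply Real.exp_le_exp.2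
            have := mul_le_mul_of_nonneg_left hlog hn0.le
            linarith
        _ = (1 - p) ^ n := by rw [Real.exp_nat_mul, Real.exp_log hp1]
        _ ≤ y := pow_le_pow_of_le_one hp1.le (by linarith) (by omega)
    calc _ = (n:ℝ) * Real.exp (- (3 / 4 * Real.log n)) := by
          nth_rewrite 2 [← Real.exp_log hn0]
          rw [← Real.exp_add]; ring_nf
      _ ≤ _ := by rw [hμ]; gcongr
  have b4 : 1 / μ ≤ Real.exp (- (Real.log n / 4)) := by
    rw [Real.exp_neg, ← one_div]
    exact one_div_le_one_div_of_le (Real.exp_pos _) b3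
  linarith

lemma iso_sull {n : ℕ} {G : SimpleGraph (Fin n)} {v : Fin n} (h : ∀ e ∈ starE v, e ∉ G.edgeSet)
    (D : Fin n → Fin n → Prop) (hD : Orients D G) : SullivanVertex D v := by
  rw [sull_iff hD.1]
  have h1 := deg_le hD v
  have : cnt (starE v) G = 0 := by
    rw [cnt, Finset.card_eq_zero, Finset.filter_eq_empty_iff]
    exact fun e he => h e he
  omega

lemma bad_le {n : ℕ} {p δ : ℝ} (h0 : 0 ≤ p) (hδ : 0 < δ) (hδ1 : δ ≤ 1/10) (hpδ : p ≤ 1/2 - 4 * δ)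
    (hn : 2 ≤ n) (c1 : Real.log n / n ≤ 1/2) (c2 : 1 ≤ δ ^ 4 * n) (c3 : 8 ≤ δ * Real.log n)
    (c4 : 5 ≤ δ ^ 2 / 8 * δ * Real.log n / 8)
    (c5 : 5 * Real.log n ≤ δ ^ 2 / 8 * (δ ^ 2 / 2) * Real.exp (Real.log n / 2))
    (c6 : 2 ≤ (δ ^ 4 / 2) ^ 2 * Real.log n / 4) (c7 : 2 ≤ Real.log n) :
    gnpProb n p (fun G => ¬ ∀ D : Fin n → Fin n → Prop, Orients D G → ∃ v, SullivanVertex D v) ≤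
      Real.exp (- (Real.log n / 4)) + Real.log n / n + (3 * Real.exp (-n) + Real.exp (- Real.log n)) := by
  have hn0 : (0:ℝ) < n := by exact_mod_cast (by omega : 0 < n)
  have hp1 : p ≤ 1 := by linarith
  set L := Real.log n with hL
  by_cases hreg : n * p ≤ L / 2
  · have hp3 : p ≤ 1/3 := by
      rw [div_le_iff₀ hn0] at c1
      by_contra hc
      push Not at hc
      nlinarith
    have h1 := prob_iso hn h0 hp3 hreg
    have h2 := prob_mono h0 hp1 (n := n)
      (P := fun G => ¬ ∀ D : Fin n → Fin n → Prop, Orients D G → ∃ v, SullivanVertex D v)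
      (Q := fun G => ¬ ∃ v, ∀ e ∈ starE v, e ∉ G.edgeSet) (by
        intro G hG ⟨v, hv⟩
        exact hG fun D hD => ⟨v, iso_sull hv D hD⟩)
    have := Real.exp_pos (-(n:ℝ))
    have := Real.exp_pos (-L)
    linarith
  · push Not at hreg
    have hp0 : 0 < p := by
      by_contra hc
      have : p = 0 := le_antisymm (not_lt.1 hc) h0
      rw [this] at hreg; linarith
    have h2 := prob_mono h0 hp1 (n := n)
      (P := fun G => ¬ ∀ D : Fin n → Fin n → Prop, Orients D G → ∃ v, SullivanVertex D v)
      (Q := fun G => (¬ EvL p (δ ^ 4 / 2) G) ∨ (¬ EvC p δ (δ ^ 2 / 8) G)) (by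
        intro G hG
        by_contra hc
        push Not at hc
        exact hG fun D hD => determ hp0 hδ hδ1 hpδ c2 G hc.1 hc.2 D hD)
    have h3 := prob_or h0 hp1 (n := n) (fun G => ¬ EvL p (δ ^ 4 / 2) G)
      (fun G => ¬ EvC p δ (δ ^ 2 / 8) G)
    have hd4 : δ ^ 4 / 2 ≤ 1 := by
      have : δ ^ 4 ≤ 1 := pow_le_one₀ hδ.le (by linarith)
      linarith
    have h4 := prob_EvL (n := n) h0 hp1 (η := δ ^ 4 / 2) (by positivity) hd4
    have h5 : (2:ℝ) ^ n * (3 * Real.exp (- (n * (n * p) * (δ ^ 4 / 2) ^ 2 / 2))) ≤ 3 * Real.exp (-n) := by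
      have e1 : (2:ℝ) ^ n ≤ Real.exp n := by
        rw [← mul_one (n:ℝ), Real.exp_nat_mul]
        gcongr
        linarith [Real.add_one_le_exp (1:ℝ)]
      have e2 : Real.exp (- (n * (n * p) * (δ ^ 4 / 2) ^ 2 / 2)) ≤ Real.exp (-(2 * n)) := by
        apply Real.exp_le_exp.2
        have : (L / 2) * (δ ^ 4 / 2) ^ 2 ≤ (n * p) * (δ ^ 4 / 2) ^ 2 := by gcongr
        have h' : 4 ≤ (n * p) * (δ ^ 4 / 2) ^ 2 := by linarith
        nlinarith
      calc _ ≤ Real.exp n * (3 * Real.exp (-(2 * n))) := by gcongr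
        _ = 3 * (Real.exp n * Real.exp (-(2 * n))) := by ring
        _ = _ := by rw [← Real.exp_add]; ring_nf
    have h6 : gnpProb n p (fun G => ¬ EvC p δ (δ ^ 2 / 8) G) ≤ Real.exp (-L) := by
      have key : ∀ t r : ℝ, 0 ≤ t → 0 ≤ r →
          p * (1 + δ) * (Real.exp t - 1) - t * (p + 2 * δ) ≤ - r →
          5 * L ≤ δ ^ 2 / 8 * r * (n * p) →
          gnpProb n p (fun G => ¬ EvC p δ (δ ^ 2 / 8) G) ≤ Real.exp (-L) := by
        intro t r ht hr htr hfin
        refine (prob_EvC (by omega) hp0 hp1 hδ (by linarith) (by positivity) ht hr htr).trans ?_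
        apply Real.exp_le_exp.2
        rw [← hL]
        have hM1 : 1 ≤ n * p := by linarith
        nlinarith
      by_cases hd : p ≤ Real.exp (-(L / 2))
      · refine key (L / 4) (δ * L / 4) (by linarith) (by positivity) ?_ ?_
        · have e1 : p * Real.exp (L / 4) ≤ 1 := by
            calc _ ≤ Real.exp (-(L / 2)) * Real.exp (L / 4) := by gcongr
              _ = Real.exp (-(L / 4)) := by rw [← Real.exp_add]; ring_nf
              _ ≤ 1 := Real.exp_le_one_iff.2 (by linarith)
          have e2 : p * (1 + δ) * (Real.exp (L / 4) - 1) ≤ 2 := by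
            have : 0 ≤ p * Real.exp (L / 4) := by positivity
            nlinarith
          nlinarith
        · have : δ ^ 2 / 8 * (δ * L / 4) * (L / 2) ≤ δ ^ 2 / 8 * (δ * L / 4) * (n * p) := by gcongr
          nlinarith
      · push Not at hd
        refine key δ (δ ^ 2 / 2) hδ.le (by positivity) ?_ ?_
        · have hab : |δ| ≤ 1 := by rw [abs_of_pos hδ]; linarith
          have e1 := (abs_le.1 (Real.abs_exp_sub_one_sub_id_le hab)).2
          have e2 : p * (1 + δ) * (Real.exp δ - 1) ≤ p * (1 + δ) * (δ + δ ^ 2) := by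
            gcongr; linarith
          have e3 : p * (2 * δ ^ 2 + δ ^ 3) ≤ 1/2 * (2 * δ ^ 2 + δ ^ 3) := by gcongr; linarith
          have e4 : δ ^ 3 ≤ 1/10 * δ ^ 2 := by
            have : δ ^ 3 = δ * δ ^ 2 := by ring
            rw [this]; gcongr
          nlinarith
        · refine c5.trans ?_
          have : Real.exp (L / 2) ≤ n * p := by
            calc Real.exp (L / 2) = n * Real.exp (-(L / 2)) := by
                  nth_rewrite 1 [← Real.exp_log hn0]
                  rw [← hL, ← Real.exp_add]; ring_nf
              _ ≤ _ := by gcongr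
          gcongr
    have := Real.exp_pos (-(L / 4))
    have : 0 ≤ L / n := by positivity
    linarith

end SullivanProof

/-- if `p = p(n) ∈ [0,1]` satisfies `limsup p < 1/2`, then a.a.s. every
orientation of `G(n,p)` contains a Sullivan vertex. -/
theorem stmt_11 (p : ℕ → ℝ) (hp : ∀ n, p n ∈ Set.Icc (0 : ℝ) 1)
    (hlim : limsup p atTop < 1/2) :
    Tendsto (fun n => gnpProb n (p n) (fun G =>
        ∀ D : Fin n → Fin n → Prop, Orients D G → ∃ v, SullivanVertex D v))
      atTop (nhds 1) := by
  obtain ⟨b, hb1, hb2⟩ := exists_between hlim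
  have hev : ∀ᶠ n in atTop, p n < b :=
    eventually_lt_of_limsup_lt hb1
      ⟨1, Filter.eventually_map.2 (Filter.Eventually.of_forall fun n => (hp n).2)⟩
  obtain ⟨δ, hδ, hδ1, hδb⟩ : ∃ δ : ℝ, 0 < δ ∧ δ ≤ 1/10 ∧ b ≤ 1/2 - 4 * δ := by
    refine ⟨min (1/10) ((1/2 - b) / 4), lt_min (by norm_num) (by linarith), min_le_left _ _, ?_⟩
    have := min_le_right (1/10 : ℝ) ((1/2 - b) / 4)
    linarith
  have hnat : Tendsto (fun n : ℕ => (n : ℝ)) atTop atTop := tendsto_natCast_atTop_atTop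
  have hlog : Tendsto (fun n : ℕ => Real.log n) atTop atTop := Real.tendsto_log_atTop.comp hnat
  have hln : Tendsto (fun n : ℕ => Real.log n / n) atTop (nhds 0) := by
    have := Real.isLittleO_log_id_atTop.tendsto_div_nhds_zero.comp hnat
    exact this
  have hexp : Tendsto (fun n : ℕ => Real.log n / Real.exp (Real.log n / 2)) atTop (nhds 0) := by
    have h1 := (Real.tendsto_pow_mul_exp_neg_atTop_nhds_zero 1).comp
      (hlog.atTop_div_const (by norm_num : (0:ℝ) < 2))
    have h2 := h1.const_mul 2
    rw [mul_zero] at h2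
    refine h2.congr fun n => ?_
    simp only [Function.comp, pow_one, Real.exp_neg]
    ring
  have hbad : Tendsto (fun n : ℕ => Real.exp (- (Real.log n / 4)) + Real.log n / n +
      (3 * Real.exp (-(n:ℝ)) + Real.exp (- Real.log n))) atTop (nhds 0) := by
    have a1 := Real.tendsto_exp_neg_atTop_nhds_zero.comp
      (hlog.atTop_div_const (by norm_num : (0:ℝ) < 4))
    have a2 := (Real.tendsto_exp_neg_atTop_nhds_zero.comp hnat).const_mul 3
    have a3 := Real.tendsto_exp_neg_atTop_nhds_zero.comp hlog
    have := (a1.add hln).add (a2.add a3)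
    simpa [Function.comp_def] using this
  have hlo : Tendsto (fun n : ℕ => 1 - (Real.exp (- (Real.log n / 4)) + Real.log n / n +
      (3 * Real.exp (-(n:ℝ)) + Real.exp (- Real.log n)))) atTop (nhds 1) := by
    simpa using hbad.const_sub 1
  refine tendsto_of_tendsto_of_tendsto_of_le_of_le' hlo tendsto_const_nhds ?_ ?_
  · have k5 : (0:ℝ) < δ ^ 2 / 8 * (δ ^ 2 / 2) / 5 := by positivity
    filter_upwards [hev, eventually_ge_atTop 2, hln.eventually_le_const (by norm_num : (0:ℝ) < 1/2),
      (hnat.const_mul_atTop (by positivity : 0 < δ ^ 4)).eventually_ge_atTop 1,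
      (hlog.const_mul_atTop hδ).eventually_ge_atTop 8,
      (hlog.const_mul_atTop (by positivity : 0 < δ ^ 2 / 8 * δ)).eventually_ge_atTop 40,
      hexp.eventually_le_const k5,
      (hlog.const_mul_atTop (by positivity : 0 < (δ ^ 4 / 2) ^ 2)).eventually_ge_atTop 8,
      hlog.eventually_ge_atTop 2] with n e1 e2 e3 e4 e5 e6 e7 e8 e9
    rw [prob_compl]
    have := bad_le (n := n) (p := p n) (hp n).1 hδ hδ1 (by linarith) e2 e3 e4 e5 (by linarith) (by
      rw [div_le_iff₀ (Real.exp_pos _)] at e7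
      linarith) (by linarith) e9
    linarith
  · refine Filter.Eventually.of_forall fun n => ?_
    rw [prob_compl]
    have := prob_nonneg (hp n).1 (hp n).2 (n := n) (P := fun G =>
      ¬ ∀ D : Fin n → Fin n → Prop, Orients D G → ∃ v, SullivanVertex D v)
    linarith
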